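/- arXiv:0902.4270 — 2 statements merged into one kernel-verified Lean document; each statement's English description precedes it below -/
import Mathlib

section
/- For all words a, b, c ∈ M one has (ab)·c·(ba) = − c a² b² − b² a² c in A_{3,d}. -/
open FreeAlgebra MulOpposite

/-- The alphabet: `(k, false)` is the letter `x_{k+1}`, `(k, true)` is `x_{k+1}ᵀ`. -/
abbrev Ltr (d : ℕ) := Fin d × Bool

/-- The free (unital) associative algebra on the `2d` letters.  The free non-unital
algebra `M_F` sits inside it as the span of the nonempty words. -/
abbrev FA (F : Type) [Field F] (d : ℕ) := FreeAlgebra F (Ltr d)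

variable (F : Type) [Field F] (d : ℕ)

/-- The word in the free algebra corresponding to a list of letters
(the empty list gives `1`, the unit). -/
def wordOf (l : List (Ltr d)) : FA F d := (l.map (FreeAlgebra.ι F)).prod

/-- The transpose: the linear anti-automorphism with `x ↦ xᵀ`, `xᵀ ↦ x`. -/
def tp (a : FA F d) : FA F d :=
  ((FreeAlgebra.lift F fun p : Ltr d => op (FreeAlgebra.ι F (p.1, !p.2))) a).unop

/-- `ā = a - aᵀ`. -/
def bar (a : FA F d) : FA F d := a - tp F d a

/-- `T(a,b,c) = a b̄ c̄ + b̄ aᵀ c̄ + b̄ c̄ a`. -/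
def Trel (a b c : FA F d) : FA F d :=
  a * bar F d b * bar F d c + bar F d b * tp F d a * bar F d c + bar F d b * bar F d c * a

/-- The copy of the free non-unital algebra `M_F`, i.e. the span of the nonempty words. -/
def MFsub : Submodule F (FA F d) :=
  Submodule.span F {w | ∃ l : List (Ltr d), l ≠ [] ∧ w = wordOf F d l}

/-- The two-sided ideal such that `A_{3,d} = M_F / (idealA ∩ M_F)`: it is generated by
`a³` for `a ∈ M_F` together with `T(a,b,c)` for `a, b, c ∈ M_F`.  (Since all generators lie in
`M_F`, its intersection with `M_F` is exactly the two-sided ideal of the non-unital algebra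
`M_F` generated by these elements; in fact it is contained in `M_F`.)
An element `u ∈ M_F` is zero in `A_{3,d}` iff `u ∈ idealA F d`. -/
def idealA : TwoSidedIdeal (FA F d) :=
  TwoSidedIdeal.span
    ({x | ∃ a ∈ MFsub F d, x = a ^ 3} ∪
     {x | ∃ a ∈ MFsub F d, ∃ b ∈ MFsub F d, ∃ c ∈ MFsub F d, x = Trel F d a b c})

theorem wordOf_mem_aux (F : Type) [Field F] (d : ℕ) (l : List (Ltr d)) (h : l ≠ []) :
    wordOf F d l ∈ MFsub F d := Submodule.subset_span ⟨l, h, rfl⟩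

theorem wordOf_append_aux (F : Type) [Field F] (d : ℕ) (l m : List (Ltr d)) :
    wordOf F d (l ++ m) = wordOf F d l * wordOf F d m := by
  simp [wordOf]

theorem cube_mem_aux (F : Type) [Field F] (d : ℕ) (x : FA F d) (h : x ∈ MFsub F d) :
    x ^ 3 ∈ idealA F d :=
  TwoSidedIdeal.subset_span (Or.inl ⟨x, h, rfl⟩)

theorem lin_mem_aux (F : Type) [Field F] (h2 : ringChar F ≠ 2) (d : ℕ) (x y : FA F d)
    (hx : x ∈ MFsub F d) (hy : y ∈ MFsub F d) :
    x * x * y + x * y * x + y * x * x ∈ idealA F d := by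
  have h20 : (2 : F) ≠ 0 := Ring.two_ne_zero h2
  have h1 := cube_mem_aux F d (x + y) (add_mem hx hy)
  have h3 := cube_mem_aux F d (x - y) (sub_mem hx hy)
  have h4 := cube_mem_aux F d y hy
  have h5 := (idealA F d).sub_mem (((idealA F d).sub_mem h1 h3))
    ((idealA F d).add_mem h4 h4)
  have h6 := (idealA F d).mul_mem_left (algebraMap F (FA F d) (2⁻¹)) _ h5
  have h7 : (x + y) ^ 3 - (x - y) ^ 3 - (y ^ 3 + y ^ 3) =
      algebraMap F (FA F d) 2 * (x * x * y + x * y * x + y * x * x) := by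
    rw [map_ofNat]
    noncomm_ring
  rw [h7, ← mul_assoc, ← map_mul, inv_mul_cancel₀ h20, map_one, one_mul] at h6
  exact h6

/-- `(ab)·c·(ba) = − c a² b² − b² a² c` in `A_{3,d}` for all words `a, b, c`. -/
theorem stmt6 (F : Type) [Field F] [Infinite F] (h2 : ringChar F ≠ 2) (d : ℕ)
    (a b c : List (Ltr d)) (ha : a ≠ []) (hb : b ≠ []) (hc : c ≠ []) :
    wordOf F d a * wordOf F d b * wordOf F d c * (wordOf F d b * wordOf F d a) +
      wordOf F d c * wordOf F d a ^ 2 * wordOf F d b ^ 2 +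
      wordOf F d b ^ 2 * wordOf F d a ^ 2 * wordOf F d c ∈ idealA F d := by
  have wa := wordOf_mem_aux F d a ha
  have wb := wordOf_mem_aux F d b hb
  have wc := wordOf_mem_aux F d c hc
  have waa := wordOf_mem_aux F d (a ++ a) (by simp [ha])
  have wbb := wordOf_mem_aux F d (b ++ b) (by simp [hb])
  have wbbc := wordOf_mem_aux F d (b ++ b ++ c) (by simp [hb])
  have wcbb := wordOf_mem_aux F d (c ++ (b ++ b)) (by simp [hb])
  simp only [wordOf_append_aux] at waa wbb wbbc wcbb
  generalize wordOf F d a = x at *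
  generalize wordOf F d b = y at *
  generalize wordOf F d c = z at *
  -- the full linearization of the cube at `x²`, `y²`, `z`
  have L := (idealA F d).sub_mem ((idealA F d).sub_mem
    (lin_mem_aux F h2 d (x * x + y * y) z (add_mem waa wbb) wc)
    (lin_mem_aux F h2 d (x * x) z waa wc)) (lin_mem_aux F h2 d (y * y) z wbb wc)
  have C0 := (idealA F d).mul_mem_right _ x
    ((idealA F d).mul_mem_left x _ (lin_mem_aux F h2 d y z wb wc))
  have C1 := lin_mem_aux F h2 d x (y * y * z) wa wbbc
  have C2 := lin_mem_aux F h2 d x (z * (y * y)) wa wcbb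
  have R := (idealA F d).add_mem ((idealA F d).sub_mem ((idealA F d).sub_mem C0 C1) C2) L
  convert R using 1
  noncomm_ring
end

section
/- Assume char(F) = 3 and d ≥ 2. If a ∈ M is a word with deg_{x_1}(a) = 3 and deg_{x_2}(a) = 3, then in A_{3,d} one has a = Σ_i α_i · a_i · x_1² x_2² x_1 x_2 · b_i for some α_i ∈ F and some a_i, b_i ∈ M_1. -/
open FreeAlgebra MulOpposite

variable (F : Type) [Field F] (d : ℕ)

section nil
variable {R : Type} [Ring R] {N : NonUnitalSubring R}

theorem nP (h3 : (3:R) = 0) (hc : ∀ a : N, (a:R)*a*a = 0) (a b : N) :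
    (a:R)*a*b + a*b*a + b*a*a = 0 := by
  have h2 := hc b
  have h3' := hc (a+b)
  have h4 := hc (a-b)
  push_cast at *
  linear_combination (norm := noncomm_ring) h4 - h3' + 2*h2 + ((a:R)*a*b+a*b*a+b*a*a)*h3

theorem nS (h3 : (3:R) = 0) (hc : ∀ a : N, (a:R)*a*a = 0) (a b c : N) :
    (a:R)*b*c + a*c*b + b*a*c + b*c*a + c*a*b + c*b*a = 0 := by
  have h := nP h3 hc (a+c) b
  have h1 := nP h3 hc a b
  have h2 := nP h3 hc c b
  push_cast at *
  linear_combination (norm := noncomm_ring) h - h1 - h2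

theorem nAnti (h3 : (3:R) = 0) (hc : ∀ a : N, (a:R)*a*a = 0) (x a : N) :
    (x:R)*x*a*x + x*a*x*x = 0 := by
  have h := nP h3 hc x a
  have h1 := hc x
  linear_combination (norm := noncomm_ring) x*h - h1*a

theorem nXX (h3 : (3:R) = 0) (hc : ∀ a : N, (a:R)*a*a = 0) (x a b : N) :
    (x:R)*a*x*b*x = x*x*a*x*b + x*x*(a*b)*x := by
  have h := nP h3 hc x b
  have h1 := nAnti h3 hc x a
  have h2 := nAnti h3 hc x (a*b)
  push_cast at *
  linear_combination (norm := noncomm_ring) x*a*h - h1*b - h2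

theorem nDer (h3 : (3:R) = 0) (hc : ∀ a : N, (a:R)*a*a = 0) (x a b : N) :
    (x:R)*x*(a*b)*x = x*x*a*x*b + a*(x*x*b*x) := by
  have h := nP h3 hc x a
  have h1 := nXX h3 hc x a b
  linear_combination (norm := noncomm_ring) h1 - h*b*x + x*x*a*b*x*h3

theorem nG (h3 : (3:R) = 0) (hc : ∀ a : N, (a:R)*a*a = 0) (x c a : N) :
    (x:R)*x*a*c + x*c*a*x + c*x*a*x = x*x*a*c - x*x*c*a + c*a*x*x - c*x*x*a := by
  have h := nP h3 hc x a
  have h1 := nP h3 hc x (c*a)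
  push_cast at *
  linear_combination (norm := noncomm_ring) c*h + h1 - c*a*x*x*h3

theorem nGder (h3 : (3:R) = 0) (hc : ∀ a : N, (a:R)*a*a = 0) (x c a b : N) :
    (x:R)*x*(a*b)*c + x*c*(a*b)*x + c*x*(a*b)*x =
      (x*x*a*c + x*c*a*x + c*x*a*x)*b + a*(x*x*b*c + x*c*b*x + c*x*b*x) := by
  have h := nDer h3 hc (x+c) a b
  have h1 := nDer h3 hc (x-c) a b
  have h2 := nDer h3 hc c a b
  push_cast at *
  linear_combination (norm := noncomm_ring) ((x:R)*x*(a*b)*c + x*c*(a*b)*x + c*x*(a*b)*x -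
      ((x*x*a*c + x*c*a*x + c*x*a*x)*b + a*(x*x*b*c + x*c*b*x + c*x*b*x)))*h3 - h + h1 + 2*h2

theorem nComm (h3 : (3:R) = 0) (hc : ∀ a : N, (a:R)*a*a = 0) (x c a b : N) :
    ((x:R)*x*a - a*x*x)*(b*c-c*b) = (c*a-a*c)*(x*x*b-b*x*x) := by
  have h := nGder h3 hc x c a b
  have h1 := nG h3 hc x c (a*b)
  have h2 := nG h3 hc x c a
  have h4 := nG h3 hc x c b
  push_cast at *
  linear_combination (norm := noncomm_ring) h - h1 + h2*b + a*h4

theorem nKey (h3 : (3:R) = 0) (hc : ∀ a : N, (a:R)*a*a = 0) (x c a b : N) :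
    ((x:R)*x*a*x)*(b*c-c*b) = (c*a-a*c)*(x*x*b*x) := by
  have h := nComm h3 hc x c a b
  have h1 := nAnti h3 hc x a
  have h2 := nAnti h3 hc x (c*a-a*c)
  have h4 := nAnti h3 hc x ((c*a-a*c)*b)
  have h5 := nDer h3 hc x (c*a-a*c) b
  have hx := hc x
  push_cast at *
  linear_combination (norm := noncomm_ring) h1*(b*c-c*b) + x*h - hx*a*(b*c-c*b) + h2*b - h4 + h5

theorem nSym (h3 : (3:R) = 0) (hc : ∀ a : N, (a:R)*a*a = 0) (x y : N)
    (g : (x:R)*x*y*y*x*y = 0) : (y:R)*y*x*x*y*x = 0 := by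
  have h := nDer h3 hc x (y*y) y
  have hy := hc y
  push_cast at *
  linear_combination (norm := noncomm_ring) -g - h + x*x*hy*x

theorem nSY2 (h3 : (3:R) = 0) (hc : ∀ a : N, (a:R)*a*a = 0) (x y : N)
    (g : (x:R)*x*y*y*x*y = 0) : (x:R)*x*y*x*y*y = 0 := by
  have h := nAnti h3 hc y x
  linear_combination (norm := noncomm_ring) x*x*h - g

theorem nSaY2 (h3 : (3:R) = 0) (hc : ∀ a : N, (a:R)*a*a = 0) (x y : N)
    (g : (x:R)*x*y*y*x*y = 0) (a : N) : (x:R)*x*y*x*a*y*y = 0 := by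
  have h := nAnti h3 hc y (x*a)
  have h1 := nDer h3 hc y x a
  have hx := hc x
  push_cast at *
  linear_combination (norm := noncomm_ring) x*x*h - x*x*h1 - g*a - hx*y*y*a*y

theorem nY2aS (h3 : (3:R) = 0) (hc : ∀ a : N, (a:R)*a*a = 0) (x y : N)
    (g : (x:R)*x*y*y*x*y = 0) (a : N) : (y:R)*y*a*x*x*y*x = 0 := by
  have h := nAnti h3 hc x y
  have h1 := nDer h3 hc y a x
  have h2 := nSY2 h3 hc y x (nSym h3 hc x y g)
  have hx := hc x
  linear_combination (norm := noncomm_ring) y*y*a*h - h1*x*x - y*y*a*y*hx - a*h2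

theorem nPaY (h3 : (3:R) = 0) (hc : ∀ a : N, (a:R)*a*a = 0) (x y : N)
    (g : (x:R)*x*y*y*x*y = 0) (a : N) : (x:R)*x*y*y*x*a*y = 0 := by
  have h := nDer h3 hc x y y
  have h1 := nP h3 hc y a
  have h2 := nP h3 hc y (x*x*y*x*a)
  have h4 := nSY2 h3 hc x y g
  have h5 := nSaY2 h3 hc x y g a
  have h6 := nSym h3 hc x y g
  push_cast at *
  linear_combination (norm := noncomm_ring) h*a*y + x*x*y*x*h1 - h4*a - h5 + h2 - h6*a - h5

theorem nYaP (h3 : (3:R) = 0) (hc : ∀ a : N, (a:R)*a*a = 0) (x y : N)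
    (g : (x:R)*x*y*y*x*y = 0) (a : N) : (y:R)*a*x*x*y*y*x = 0 := by
  have h := nDer h3 hc x y y
  have h1 := nP h3 hc y a
  have h2 := nP h3 hc y (a*x*x*y*x)
  have h4 := nSY2 h3 hc x y g
  have h5 := nY2aS h3 hc x y g a
  have h6 := nSym h3 hc x y g
  push_cast at *
  linear_combination (norm := noncomm_ring) y*a*h + h1*x*x*y*x - h5 - a*h6 + h2 - h5 - a*h4

theorem nYP (h3 : (3:R) = 0) (hc : ∀ a : N, (a:R)*a*a = 0) (x y : N)
    (g : (x:R)*x*y*y*x*y = 0) : (y:R)*x*x*y*y*x = 0 := by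
  have h := nDer h3 hc x y y
  have h2 := nP h3 hc y (x*x*y*x)
  have h4 := nSY2 h3 hc x y g
  push_cast at *
  linear_combination (norm := noncomm_ring) y*h + h2 - h4

theorem nED (h3 : (3:R) = 0) (hc : ∀ a : N, (a:R)*a*a = 0) (x y : N)
    (g : (x:R)*x*y*y*x*y = 0) (b : N) : (y:R)*y*(x*x*b*x)*y = 0 := by
  have h := nS h3 hc (x*x) (y*y) (b*x)
  have h1 := nDer h3 hc x (y*y) b
  have h2 := nAnti h3 hc x (y*y)
  have h4 := nPaY h3 hc x y g b
  have hx := hc x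
  have hy := hc y
  push_cast at *
  linear_combination (norm := noncomm_ring) (y:R)*y*(x*x*b*x)*y*h3 - h*y + x*x*b*x*hy
    + y*y*b*hx*y + b*hx*y*y*y + h1*y + h4 + b*h2*y - b*g

theorem nDE (h3 : (3:R) = 0) (hc : ∀ a : N, (a:R)*a*a = 0) (x y : N)
    (g : (x:R)*x*y*y*x*y = 0) (a b : N) : ((x:R)*x*a*x)*(y*y*b*y) = 0 := by
  have h := nKey h3 hc x (b*y) a (y*y)
  have h1 := nYaP h3 hc x y g a
  have h2 := nYP h3 hc x y g
  have hy := hc y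
  push_cast at *
  linear_combination (norm := noncomm_ring) h + x*x*a*x*b*hy + b*h1 - a*b*h2
end nil

section ext
variable {F R : Type} [Field F] [Ring R] [Algebra F R] {N : NonUnitalSubring R}

theorem extR (hR : ∀ r : R, ∃ (k : F) (n : N), r = k • (1:R) + n) (P : R → Prop)
    (h1 : P 1) (hs : ∀ (k : F) r, P r → P (k • r)) (ha : ∀ r s, P r → P s → P (r+s))
    (hN : ∀ n : N, P n) (r : R) : P r := by
  obtain ⟨k, n, rfl⟩ := hR r
  exact ha _ _ (hs _ _ h1) (hN n)

theorem rDer (hR : ∀ r : R, ∃ (k : F) (n : N), r = k • (1:R) + n)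
    (h3 : (3:R) = 0) (hc : ∀ a : N, (a:R)*a*a = 0) (x : N) (a b : R) :
    (x:R)*x*(a*b)*x = x*x*a*x*b + a*(x*x*b*x) := by
  have hx := hc x
  refine extR hR (fun a => (x:R)*x*(a*b)*x = x*x*a*x*b + a*(x*x*b*x)) ?_ ?_ ?_ ?_ a
  · simp [hx]
  · intro k r h
    simp only [smul_mul_assoc, mul_smul_comm, h, smul_add]
  · intro r s h h'
    linear_combination (norm := noncomm_ring) h + h'
  · intro a
    refine extR hR (fun b => (x:R)*x*(a*b)*x = x*x*a*x*b + a*(x*x*b*x)) ?_ ?_ ?_ ?_ b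
    · simp [hx]
    · intro k r h
      simp only [smul_mul_assoc, mul_smul_comm, h, smul_add]
    · intro r s h h'
      linear_combination (norm := noncomm_ring) h + h'
    · intro b
      exact nDer h3 hc x a b

theorem rXX (hR : ∀ r : R, ∃ (k : F) (n : N), r = k • (1:R) + n)
    (h3 : (3:R) = 0) (hc : ∀ a : N, (a:R)*a*a = 0) (x : N) (a b : R) :
    (x:R)*a*x*b*x = x*x*a*x*b + x*x*(a*b)*x := by
  have hx := hc x
  refine extR hR (fun a => (x:R)*a*x*b*x = x*x*a*x*b + x*x*(a*b)*x) ?_ ?_ ?_ ?_ a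
  · simp [hx]
  · intro k r h
    simp only [smul_mul_assoc, mul_smul_comm, h, smul_add]
  · intro r s h h'
    linear_combination (norm := noncomm_ring) h + h'
  · intro a
    refine extR hR (fun b => (x:R)*a*x*b*x = x*x*a*x*b + x*x*(a*b)*x) ?_ ?_ ?_ ?_ b
    · have h := nAnti h3 hc x a
      linear_combination (norm := noncomm_ring) h - x*x*a*x*h3
    · intro k r h
      simp only [smul_mul_assoc, mul_smul_comm, h, smul_add]
    · intro r s h h'
      linear_combination (norm := noncomm_ring) h + h'
    · intro b
      exact nXX h3 hc x a b

theorem rDE (hR : ∀ r : R, ∃ (k : F) (n : N), r = k • (1:R) + n)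
    (h3 : (3:R) = 0) (hc : ∀ a : N, (a:R)*a*a = 0) (x y : N)
    (g : (x:R)*x*y*y*x*y = 0) (a b : R) : ((x:R)*x*a*x)*(y*y*b*y) = 0 := by
  have hx := hc x
  have hy := hc y
  refine extR hR (fun a => ((x:R)*x*a*x)*(y*y*b*y) = 0) ?_ ?_ ?_ ?_ a
  · simp [hx]
  · intro k r h
    simp only [smul_mul_assoc, mul_smul_comm, h, smul_zero]
  · intro r s h h'
    linear_combination (norm := noncomm_ring) h + h'
  · intro a
    refine extR hR (fun b => ((x:R)*x*a*x)*(y*y*b*y) = 0) ?_ ?_ ?_ ?_ b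
    · simp [hy]
    · intro k r h
      simp only [smul_mul_assoc, mul_smul_comm, h, smul_zero]
    · intro r s h h'
      linear_combination (norm := noncomm_ring) h + h'
    · intro b
      exact nDE h3 hc x y g a b

theorem rED (hR : ∀ r : R, ∃ (k : F) (n : N), r = k • (1:R) + n)
    (h3 : (3:R) = 0) (hc : ∀ a : N, (a:R)*a*a = 0) (x y : N)
    (g : (x:R)*x*y*y*x*y = 0) (a : R) : (y:R)*y*(x*x*a*x)*y = 0 := by
  have hx := hc x
  refine extR hR (fun a => (y:R)*y*(x*x*a*x)*y = 0) ?_ ?_ ?_ ?_ a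
  · simp [hx]
  · intro k r h
    simp only [smul_mul_assoc, mul_smul_comm, h, smul_zero]
  · intro r s h h'
    linear_combination (norm := noncomm_ring) h + h'
  · intro a
    exact nED h3 hc x y g a
end ext

section fx

structure Fx {R : Type} [Ring R] (x y : R) : Prop where
  dx : ∀ a b : R, x*x*(a*b)*x = x*x*a*x*b + a*(x*x*b*x)
  dy : ∀ a b : R, y*y*(a*b)*y = y*y*a*y*b + a*(y*y*b*y)
  xx : ∀ a b : R, x*a*x*b*x = x*x*a*x*b + x*x*(a*b)*x
  yy : ∀ a b : R, y*a*y*b*y = y*y*a*y*b + y*y*(a*b)*y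
  de : ∀ a b : R, (x*x*a*x)*(y*y*b*y) = 0
  ed : ∀ b a : R, (y*y*b*y)*(x*x*a*x) = 0
  comp : ∀ a : R, y*y*(x*x*a*x)*y = 0
  q1 : y*y*x*x*y*x = 0
  q2 : x*x*y*y*x*y = 0
  x3 : x*x*x = 0

variable {R : Type} [Ring R] {x y : R}

theorem Fx.eud (f : Fx x y) (b u z : R) : (y*y*b*y)*u*(x*x*z*x) = 0 := by
  linear_combination (norm := noncomm_ring) -(f.dy b u * (x*x*z*x)) + f.ed (b*u) z - b*f.ed u z

theorem Fx.due (f : Fx x y) (z u b : R) : (x*x*z*x)*u*(y*y*b*y) = 0 := by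
  linear_combination (norm := noncomm_ring) -((x*x*z*x) * f.dy u b) + f.de z (u*b) - f.de z u*b

theorem Fx.eudv (f : Fx x y) (u z v : R) : y*y*(u*(x*x*z*x)*v)*y = 0 := by
  linear_combination (norm := noncomm_ring) f.dy u ((x*x*z*x)*v) + u*f.dy (x*x*z*x) v
    + f.ed u z*v + u*f.comp z*v + u*f.de z v

theorem Fx.c30 (f : Fx x y) (A B C U z V : R) : A*y*B*y*C*y*U*(x*x*z*x)*V = 0 := by
  linear_combination (norm := noncomm_ring) A*f.yy B C*U*(x*x*z*x)*V + A*f.eud B (C*U) z*V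
    + A*f.eud (B*C) U z*V

theorem Fx.c21 (f : Fx x y) (A B C z V W : R) : A*y*B*y*C*(x*x*z*x)*V*y*W = 0 := by
  linear_combination (norm := noncomm_ring) A*f.yy B (C*(x*x*z*x)*V)*W + A*f.eud B C z*V*W
    + A*f.eudv (B*C) z V*W

theorem Fx.c12 (f : Fx x y) (A B C z V W : R) : A*y*B*(x*x*z*x)*V*y*C*y*W = 0 := by
  linear_combination (norm := noncomm_ring) A*f.yy (B*(x*x*z*x)*V) C*W + A*f.eudv B z V*C*W
    + A*f.eudv B z (V*C)*W

theorem Fx.c03 (f : Fx x y) (A U B C z W : R) : A*(x*x*z*x)*U*y*B*y*C*y*W = 0 := by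
  linear_combination (norm := noncomm_ring) A*(x*x*z*x)*U*f.yy B C*W + A*f.due z U B*C*W
    + A*f.due z U (B*C)*W

theorem Fx.b (f : Fx x y) (b : R) : y*y*(b*(x*x))*y*x = 0 := by
  linear_combination (norm := noncomm_ring) f.dy b (x*x)*x + y*y*b*y*f.x3 + b*f.q1

theorem Fx.b' (f : Fx x y) (b : R) : x*x*(y*y*(x*b)*y) = 0 := by
  linear_combination (norm := noncomm_ring) x*x*f.dy x b + f.x3*y*y*b*y + f.q2*b

theorem Fx.c20 (f : Fx x y) (A B C V : R) : A*y*B*y*C*(x*x*y*x)*V = 0 := by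
  linear_combination (norm := noncomm_ring) A*f.yy B (C*(x*x))*x*V + A*y*y*B*y*C*f.x3*V
    + A*f.b (B*C)*V

theorem Fx.c11 (f : Fx x y) (A B C V : R) : A*y*B*(x*x*y*x)*C*y*V = 0 := by
  linear_combination (norm := noncomm_ring) A*f.yy (B*(x*x)) (x*C)*V + A*f.b B*C*V
    + A*y*y*B*f.x3*C*y*V

theorem Fx.c02 (f : Fx x y) (A B C V : R) : A*(x*x*y*x)*B*y*C*y*V = 0 := by
  linear_combination (norm := noncomm_ring) A*x*x*f.yy (x*B) C*V + A*f.b' B*C*V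
    + A*f.b' (B*C)*V

theorem splitc {α : Type} [DecidableEq α] {a : α} {n : ℕ} {l : List α}
    (h : l.count a = n + 1) : ∃ p q : List α, l = p ++ a :: q ∧ q.count a = n := by
  induction l with
  | nil => simp at h
  | cons b t ih =>
    by_cases hb : b = a
    · subst hb
      exact ⟨[], t, rfl, by simpa using h⟩
    · rw [List.count_cons_of_ne hb] at h
      obtain ⟨p, q, rfl, hq⟩ := ih h
      exact ⟨b :: p, q, rfl, hq⟩

variable {α : Type} [DecidableEq α]

theorem Fx.letter (f : Fx x y) (v : α → R) (Y : α) (hY : v Y = y) (z : α) (p r : List α)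
    (h : p.count Y + (if z = Y then 1 else 0) + r.count Y = 3) :
    (p.map v).prod * (x*x*v z*x) * (r.map v).prod = 0 := by
  split_ifs at h with hz
  · subst hz
    have hp : p.count z = 0 ∨ p.count z = 1 ∨ p.count z = 2 := by omega
    rcases hp with hp | hp | hp
    · obtain ⟨B, r1, rfl, h1⟩ := splitc (n := 1) (a := z) (l := r) (by omega)
      obtain ⟨C, V, rfl, h2⟩ := splitc h1
      simpa [mul_assoc, hY] using f.c02 (p.map v).prod (B.map v).prod (C.map v).prod (V.map v).prod
    · obtain ⟨A, B, rfl, h1⟩ := splitc hp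
      obtain ⟨C, V, rfl, h2⟩ := splitc (n := 0) (a := z) (l := r) (by omega)
      simpa [mul_assoc, hY] using f.c11 (A.map v).prod (B.map v).prod (C.map v).prod (V.map v).prod
    · obtain ⟨A, B, rfl, h1⟩ := splitc hp
      obtain ⟨B, C, rfl, h2⟩ := splitc h1
      simpa [mul_assoc, hY] using f.c20 (A.map v).prod (B.map v).prod (C.map v).prod (r.map v).prod
  · have hp : p.count Y = 0 ∨ p.count Y = 1 ∨ p.count Y = 2 ∨ p.count Y = 3 := by omega
    rcases hp with hp | hp | hp | hp
    · obtain ⟨U, r1, rfl, h1⟩ := splitc (n := 2) (a := Y) (l := r) (by omega)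
      obtain ⟨B, r1, rfl, h2⟩ := splitc h1
      obtain ⟨C, W, rfl, h4⟩ := splitc h2
      simpa [mul_assoc, hY] using f.c03 (p.map v).prod (U.map v).prod (B.map v).prod
        (C.map v).prod (v z) (W.map v).prod
    · obtain ⟨A, B, rfl, h1⟩ := splitc hp
      obtain ⟨V, r1, rfl, h1⟩ := splitc (n := 1) (a := Y) (l := r) (by omega)
      obtain ⟨C, W, rfl, h1⟩ := splitc h1
      simpa [mul_assoc, hY] using f.c12 (A.map v).prod (B.map v).prod (C.map v).prod
        (v z) (V.map v).prod (W.map v).prod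
    · obtain ⟨A, B, rfl, h1⟩ := splitc hp
      obtain ⟨B, C, rfl, h1⟩ := splitc h1
      obtain ⟨V, W, rfl, h1⟩ := splitc (n := 0) (a := Y) (l := r) (by omega)
      simpa [mul_assoc, hY] using f.c21 (A.map v).prod (B.map v).prod (C.map v).prod
        (v z) (V.map v).prod (W.map v).prod
    · obtain ⟨A, B, rfl, h1⟩ := splitc hp
      obtain ⟨B, C, rfl, h2⟩ := splitc h1
      obtain ⟨C, U, rfl, h4⟩ := splitc h2
      simpa [mul_assoc, hY] using f.c30 (A.map v).prod (B.map v).prod (C.map v).prod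
        (U.map v).prod (v z) (r.map v).prod

theorem Fx.dword (f : Fx x y) (v : α → R) (Y : α) (hY : v Y = y) (q : List α) :
    ∀ (p r : List α), p.count Y + q.count Y + r.count Y = 3 →
    (p.map v).prod * (x*x*(q.map v).prod*x) * (r.map v).prod = 0 := by
  induction q with
  | nil =>
    intro p r _
    simp [f.x3]
  | cons z q ih =>
    intro p r h
    rw [List.count_cons] at h
    have h1 := f.letter v Y hY z p (q ++ r) (by
      rw [List.count_append]
      by_cases hz : z = Y <;> simp_all <;> omega)
    have h2 := ih (p ++ [z]) r (by
      rw [List.count_append]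
      by_cases hz : z = Y <;> simp_all <;> omega)
    simp only [List.map_append, List.prod_append, List.map_cons, List.map_nil, List.prod_cons,
      List.prod_nil, mul_one] at h1 h2 ⊢
    rw [f.dx]
    linear_combination (norm := noncomm_ring) h1 + h2

theorem Fx.word (f : Fx x y) (v : α → R) (X Y : α) (hX : v X = x) (hY : v Y = y) (hXY : X ≠ Y)
    (l : List α) (h1 : l.count X = 3) (h2 : l.count Y = 3) : (l.map v).prod = 0 := by
  obtain ⟨A, B, rfl, h4⟩ := splitc h1
  obtain ⟨B, C, rfl, h5⟩ := splitc h4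
  obtain ⟨C, E, rfl, h6⟩ := splitc h5
  simp only [List.count_append, List.count_cons_of_ne hXY] at h2
  have k1 := f.dword v Y hY B A (C ++ E) (by simp only [List.count_append]; omega)
  have k2 := f.dword v Y hY (B ++ C) A E (by simp only [List.count_append]; omega)
  simp only [List.map_append, List.prod_append, List.map_cons, List.prod_cons, hX] at k1 k2 ⊢
  linear_combination (norm := noncomm_ring)
    (A.map v).prod * f.xx (B.map v).prod (C.map v).prod * (E.map v).prod + k1 + k2

end fx

theorem mkFx {F R : Type} [Field F] [Ring R] [Algebra F R] {N : NonUnitalSubring R}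
    (hR : ∀ r : R, ∃ (k : F) (n : N), r = k • (1:R) + n)
    (h3 : (3:R) = 0) (hc : ∀ a : N, (a:R)*a*a = 0) (x y : N)
    (g : (x:R)*x*y*y*x*y = 0) : Fx (x:R) (y:R) where
  dx := rDer hR h3 hc x
  dy := rDer hR h3 hc y
  xx := rXX hR h3 hc x
  yy := rXX hR h3 hc y
  de := rDE hR h3 hc x y g
  ed := rDE hR h3 hc y x (nSym h3 hc x y g)
  comp := rED hR h3 hc x y g
  q1 := nSym h3 hc x y g
  q2 := g
  x3 := hc x

section fin
variable {F d}

theorem wordOf_append (a b : List (Ltr d)) : wordOf F d (a ++ b) = wordOf F d a * wordOf F d b := by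
  simp [wordOf]

theorem mem_wspan (r : FA F d) : r ∈ Submodule.span F (Set.range (wordOf F d)) := by
  induction r using FreeAlgebra.induction with
  | grade0 k =>
    rw [Algebra.algebraMap_eq_smul_one]
    exact Submodule.smul_mem _ _ (Submodule.subset_span ⟨[], by simp [wordOf]⟩)
  | grade1 z => exact Submodule.subset_span ⟨[z], by simp [wordOf]⟩
  | mul a b ha hb =>
    have h := Submodule.mul_mem_mul ha hb
    rw [Submodule.span_mul_span] at h
    refine Submodule.span_mono ?_ h
    rintro _ ⟨_, ⟨u, rfl⟩, _, ⟨v, rfl⟩, rfl⟩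
    exact ⟨u ++ v, wordOf_append u v⟩
  | add a b ha hb => exact Submodule.add_mem _ ha hb

theorem MF_mul {a b : FA F d} (ha : a ∈ MFsub F d) (hb : b ∈ MFsub F d) : a * b ∈ MFsub F d := by
  have h := Submodule.mul_mem_mul ha hb
  rw [MFsub, Submodule.span_mul_span] at h
  refine Submodule.span_mono ?_ h
  rintro _ ⟨_, ⟨u, hu, rfl⟩, _, ⟨v, hv, rfl⟩, rfl⟩
  exact ⟨u ++ v, by simp [hu], (wordOf_append u v).symm⟩

theorem FA_dec (r : FA F d) : ∃ (k : F) (n : FA F d), n ∈ MFsub F d ∧ r = k • (1 : FA F d) + n := by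
  have h := mem_wspan r
  induction h using Submodule.span_induction with
  | mem w hw =>
    obtain ⟨l, rfl⟩ := hw
    by_cases hl : l = []
    · subst hl
      exact ⟨1, 0, Submodule.zero_mem _, by simp [wordOf]⟩
    · exact ⟨0, wordOf F d l, Submodule.subset_span ⟨l, hl, rfl⟩, by simp⟩
  | zero => exact ⟨0, 0, Submodule.zero_mem _, by simp⟩
  | add a b _ _ ha hb =>
    obtain ⟨k, n, hn, rfl⟩ := ha
    obtain ⟨k', n', hn', rfl⟩ := hb
    exact ⟨k + k', n + n', Submodule.add_mem _ hn hn', by rw [add_smul]; abel⟩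
  | smul c a _ ha =>
    obtain ⟨k, n, hn, rfl⟩ := ha
    exact ⟨c * k, c • n, Submodule.smul_mem _ _ hn, by rw [smul_add, smul_smul]⟩

/-- the span of the `a g b` -/
def gsp (g : FA F d) : Submodule F (FA F d) :=
  Submodule.span F {y : FA F d | ∃ a b : List (Ltr d), y = wordOf F d a * g * wordOf F d b}

theorem gsp_left (g : FA F d) (r : FA F d) {s : FA F d} (hs : s ∈ gsp g) : r * s ∈ gsp g := by
  have h := Submodule.mul_mem_mul (mem_wspan r) hs
  rw [gsp, Submodule.span_mul_span] at h
  refine Submodule.span_mono ?_ h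
  rintro _ ⟨_, ⟨u, rfl⟩, _, ⟨a, b, rfl⟩, rfl⟩
  exact ⟨u ++ a, b, by simp only [wordOf_append, mul_assoc]⟩

theorem gsp_right (g : FA F d) (r : FA F d) {s : FA F d} (hs : s ∈ gsp g) : s * r ∈ gsp g := by
  have h := Submodule.mul_mem_mul hs (mem_wspan r)
  rw [gsp, Submodule.span_mul_span] at h
  refine Submodule.span_mono ?_ h
  rintro _ ⟨_, ⟨a, b, rfl⟩, _, ⟨u, rfl⟩, rfl⟩
  exact ⟨a, b ++ u, by simp only [wordOf_append, mul_assoc]⟩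

/-- the ideal generated by `idealA` and `g` -/
def gId (g : FA F d) : TwoSidedIdeal (FA F d) :=
  TwoSidedIdeal.mk' {u | ∃ s ∈ gsp g, u - s ∈ idealA F d}
    ⟨0, Submodule.zero_mem _, by simpa using (idealA F d).zero_mem⟩
    (by
      rintro a b ⟨s, hs, h⟩ ⟨t, ht, h'⟩
      refine ⟨s + t, Submodule.add_mem _ hs ht, ?_⟩
      rw [add_sub_add_comm]
      exact (idealA F d).add_mem h h')
    (by
      rintro a ⟨s, hs, h⟩
      refine ⟨-s, Submodule.neg_mem _ hs, ?_⟩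
      rw [neg_sub_neg, ← neg_sub]
      exact (idealA F d).neg_mem h)
    (by
      rintro a b ⟨s, hs, h⟩
      refine ⟨a * s, gsp_left g a hs, ?_⟩
      rw [← mul_sub]
      exact (idealA F d).mul_mem_left _ _ h)
    (by
      rintro a b ⟨s, hs, h⟩
      refine ⟨s * b, gsp_right g b hs, ?_⟩
      rw [← sub_mul]
      exact (idealA F d).mul_mem_right _ _ h)

theorem mem_gId (g u : FA F d) : u ∈ gId g ↔ ∃ s ∈ gsp g, u - s ∈ idealA F d :=
  TwoSidedIdeal.mem_mk' _ _ _ _ _ _ _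

theorem mk_zero (I : TwoSidedIdeal (FA F d)) (u : FA F d) : I.ringCon.mk' u = 0 ↔ u ∈ I := by
  rw [← TwoSidedIdeal.mem_ker, TwoSidedIdeal.ker_ringCon_mk']

/-- the image of `MFsub` in the quotient -/
def Nq (I : TwoSidedIdeal (FA F d)) : NonUnitalSubring I.ringCon.Quotient where
  carrier := {q | ∃ a ∈ MFsub F d, I.ringCon.mk' a = q}
  zero_mem' := ⟨0, Submodule.zero_mem _, map_zero _⟩
  add_mem' := by
    rintro _ _ ⟨a, ha, rfl⟩ ⟨b, hb, rfl⟩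
    exact ⟨a + b, Submodule.add_mem _ ha hb, map_add _ _ _⟩
  neg_mem' := by
    rintro _ ⟨a, ha, rfl⟩
    exact ⟨-a, Submodule.neg_mem _ ha, map_neg _ _⟩
  mul_mem' := by
    rintro _ _ ⟨a, ha, rfl⟩ ⟨b, hb, rfl⟩
    exact ⟨a * b, MF_mul ha hb, map_mul _ _ _⟩

theorem main_aux [CharP F 3] (X Y : Ltr d) (hXY : X ≠ Y) (l : List (Ltr d))
    (h1 : l.count X = 3) (h2 : l.count Y = 3) :
    wordOf F d l ∈ gId (ι F X ^ 2 * ι F Y ^ 2 * ι F X * ι F Y : FA F d) := by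
  set g : FA F d := ι F X ^ 2 * ι F Y ^ 2 * ι F X * ι F Y with hg
  set π := (gId g).ringCon.mk' with hπ
  have hι : ∀ z : Ltr d, ι F z ∈ MFsub F d := fun z =>
    Submodule.subset_span ⟨[z], by simp, by simp [wordOf]⟩
  have hR : ∀ r : (gId g).ringCon.Quotient, ∃ (k : F) (n : Nq (gId g)),
      r = k • (1 : (gId g).ringCon.Quotient) + n := by
    intro r
    obtain ⟨r, rfl⟩ := RingCon.mk'_surjective _ r
    obtain ⟨k, n, hn, rfl⟩ := FA_dec r
    refine ⟨k, ⟨π n, n, hn, rfl⟩, ?_⟩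
    rw [map_add]
    rfl
  have h3 : (3 : (gId g).ringCon.Quotient) = 0 := by
    have : (3 : F) = 0 := by exact_mod_cast CharP.cast_eq_zero F 3
    have h : algebraMap F (gId g).ringCon.Quotient 3 = 0 := by rw [this, map_zero]
    rwa [map_ofNat] at h
  have hc : ∀ a : Nq (gId g), (a : (gId g).ringCon.Quotient) * a * a = 0 := by
    rintro ⟨_, a, ha, rfl⟩
    change π a * π a * π a = 0
    rw [← map_mul, ← map_mul, hπ, mk_zero, mem_gId]
    refine ⟨0, Submodule.zero_mem _, ?_⟩
    rw [sub_zero]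
    exact TwoSidedIdeal.subset_span (Or.inl ⟨a, ha, by noncomm_ring⟩)
  have hgg : π (ι F X) * π (ι F X) * π (ι F Y) * π (ι F Y) * π (ι F X) * π (ι F Y) = 0 := by
    simp only [← map_mul]
    rw [hπ, mk_zero, mem_gId]
    refine ⟨g, Submodule.subset_span ⟨[], [], by simp [wordOf]⟩, ?_⟩
    have : (ι F X * ι F X * ι F Y * ι F Y * ι F X * ι F Y : FA F d) - g = 0 := by
      rw [hg]; noncomm_ring
    rw [this]
    exact (idealA F d).zero_mem
  have f := mkFx hR h3 hc ⟨π (ι F X), ι F X, hι X, rfl⟩ ⟨π (ι F Y), ι F Y, hι Y, rfl⟩ hgg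
  have := f.word (fun z => π (ι F z)) X Y rfl rfl hXY l (by convert h1) (by convert h2)
  rw [← mk_zero, ← hπ, wordOf, map_list_prod, List.map_map]
  exact this
end fin


/-- if `char F = 3` and `a` is a word with `deg_{x₁}(a) = deg_{x₂}(a) = 3`, then in
`A_{3,d}` one has `a = Σ αᵢ aᵢ x₁² x₂² x₁ x₂ bᵢ` with `αᵢ ∈ F`, `aᵢ, bᵢ ∈ M₁`. -/
theorem stmt7 (F : Type) [Field F] [Infinite F] [CharP F 3] (d : ℕ) (hd : 2 ≤ d)
    (l : List (Ltr d)) (hl : l ≠ [])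
    (hdeg1 : l.count (((⟨0, by omega⟩ : Fin d), false) : Ltr d) = 3)
    (hdeg2 : l.count (((⟨1, hd⟩ : Fin d), false) : Ltr d) = 3) :
    ∃ s ∈ Submodule.span F {y : FA F d | ∃ a b : List (Ltr d),
        y = wordOf F d a *
            (FreeAlgebra.ι F (((⟨0, by omega⟩ : Fin d), false) : Ltr d) ^ 2 *
             FreeAlgebra.ι F (((⟨1, hd⟩ : Fin d), false) : Ltr d) ^ 2 *
             FreeAlgebra.ι F (((⟨0, by omega⟩ : Fin d), false) : Ltr d) *
             FreeAlgebra.ι F (((⟨1, hd⟩ : Fin d), false) : Ltr d)) * wordOf F d b},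
      wordOf F d l - s ∈ idealA F d := by
  have h := main_aux (F := F) (((⟨0, by omega⟩ : Fin d), false) : Ltr d)
    (((⟨1, hd⟩ : Fin d), false) : Ltr d) (by simp) l hdeg1 hdeg2
  rw [mem_gId] at h
  exact h
end
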